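/- arXiv:0707.2672 — 2 statements merged into one kernel-verified Lean document; each statement's English description precedes it below -/
import Mathlib

section
/- Let ℓ ≥ 2 and S = ℂ[z_1,…,z_ℓ]. Let α_1,…,α_n (n ≥ 2) be pairwise non-proportional nonzero linear forms on ℂ^ℓ and Q = ∏_{i=1}^n α_i. Then the radical of the Jacobian ideal J(Q) equals the intersection over all pairs i < j of the ideals generated by the corresponding pair of linear forms: √(J(Q)) = ⋂_{1 ≤ i < j ≤ n} (α_i, α_j). -/
/-!
Both inclusions are checked on primes.

`√J(Q) ⊆ (α_i, α_j)`: since `Q = α_i α_j R`, the product rule puts every partial derivative of `Q`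
in `(α_i, α_j)`, so it is enough that this ideal is prime. As `α_i, α_j` are linearly independent
there are vectors `u, v` dual to them, and the substitution `z ↦ z - α_i(z) u - α_j(z) v` (the
projection onto `H_i ∩ H_j`) kills `α_i` and `α_j` and is the identity modulo `(α_i, α_j)`. Hence
`(α_i, α_j)` is the kernel of a ring endomorphism of a domain (`isPrime_span_pair`).

`⋂ (α_i, α_j) ⊆ √J(Q)`: a prime `P ⊇ J(Q)` contains `Q` by Euler's formula, hence some `α_i`;
modulo `α_i`, the gradient of `Q` is `∏_{j ≠ i} α_j` times the nonzero vector `a_i`, so `P` contains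
some `α_j` with `j ≠ i` as well (`exists_pair_mem_of_jac_le`).
-/

open MvPolynomial

/-- The linear form with coefficient vector `a`, as a polynomial. -/
noncomputable def lin {ℓ : ℕ} (a : Fin ℓ → ℂ) : MvPolynomial (Fin ℓ) ℂ :=
  ∑ k, C (a k) * X k

/-- The Jacobian ideal of a polynomial `Q`, generated by its partial derivatives. -/
noncomputable def jac {ℓ : ℕ} (Q : MvPolynomial (Fin ℓ) ℂ) :
    Ideal (MvPolynomial (Fin ℓ) ℂ) :=
  Ideal.span (Set.range fun k => pderiv k Q)

lemma pderiv_lin {ℓ : ℕ} (a : Fin ℓ → ℂ) (k : Fin ℓ) : pderiv k (lin a) = C (a k) := by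
  simp [lin, pderiv_X, Pi.single_apply]

lemma isHomogeneous_lin {ℓ : ℕ} (a : Fin ℓ → ℂ) : (lin a).IsHomogeneous 1 :=
  IsHomogeneous.sum _ _ _ fun k _ => isHomogeneous_C_mul_X (a k) k

/-- Non-proportional vectors have dual vectors; they come from a nonvanishing 2 × 2 minor. -/
lemma exists_dual_pair {ℓ : ℕ} {a b : Fin ℓ → ℂ} (hb : b ≠ 0) (hab : ∀ c : ℂ, a ≠ c • b) :
    ∃ u v : Fin ℓ → ℂ, ∑ k, a k * u k = 1 ∧ ∑ k, b k * u k = 0 ∧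
      ∑ k, a k * v k = 0 ∧ ∑ k, b k * v k = 1 := by
  obtain ⟨m, hm⟩ := Function.ne_iff.1 hb
  obtain ⟨k, hk⟩ := Function.ne_iff.1 (hab (a m / b m))
  simp only [Pi.zero_apply, Pi.smul_apply, smul_eq_mul] at hm hk
  have hD : a k * b m - a m * b k ≠ 0 := by
    intro h
    apply hk
    field_simp
    linear_combination h
  obtain ⟨d, hd⟩ : ∃ d, (a k * b m - a m * b k) * d = 1 := ⟨_, mul_inv_cancel₀ hD⟩
  have key : ∀ (c : Fin ℓ → ℂ) (s t : ℂ),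
      ∑ p, c p * ((Pi.single k s : Fin ℓ → ℂ) p + (Pi.single m t : Fin ℓ → ℂ) p)
        = c k * s + c m * t := by
    intro c s t
    simp [mul_add, Finset.sum_add_distrib, Pi.single_apply]
  refine ⟨fun p => (Pi.single k (b m * d) : Fin ℓ → ℂ) p +
      (Pi.single m (-b k * d) : Fin ℓ → ℂ) p,
    fun p => (Pi.single k (-a m * d) : Fin ℓ → ℂ) p +
      (Pi.single m (a k * d) : Fin ℓ → ℂ) p, ?_, ?_, ?_, ?_⟩ <;> rw [key]
  · linear_combination hd
  · ring
  · ring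
  · linear_combination hd

/-- The ideal is the kernel of the substitution projecting onto the common zero locus. -/
lemma isPrime_span_pair {ℓ : ℕ} {a b : Fin ℓ → ℂ} (hb : b ≠ 0) (hab : ∀ c : ℂ, a ≠ c • b) :
    (Ideal.span ({lin a, lin b} : Set (MvPolynomial (Fin ℓ) ℂ))).IsPrime := by
  obtain ⟨u, v, hau, hbu, hav, hbv⟩ := exists_dual_pair hb hab
  set I := Ideal.span ({lin a, lin b} : Set (MvPolynomial (Fin ℓ) ℂ)) with hI
  have haI : lin a ∈ I := Ideal.subset_span (by simp)
  have hbI : lin b ∈ I := Ideal.subset_span (by simp)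
  let φ : MvPolynomial (Fin ℓ) ℂ →ₐ[ℂ] MvPolynomial (Fin ℓ) ℂ :=
    aeval fun k => X k - C (u k) * lin a - C (v k) * lin b
  have hφ : ∀ c : Fin ℓ → ℂ, φ (lin c) =
      lin c - C (∑ k, c k * u k) * lin a - C (∑ k, c k * v k) * lin b := by
    intro c
    have h1 : φ (lin c) = ∑ k, C (c k) * (X k - C (u k) * lin a - C (v k) * lin b) := by
      simp [φ, lin, algebraMap_eq]
    rw [h1, map_sum, map_sum, Finset.sum_mul, Finset.sum_mul]
    conv_rhs => rw [lin]
    rw [← Finset.sum_sub_distrib, ← Finset.sum_sub_distrib]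
    refine Finset.sum_congr rfl fun k _ => ?_
    simp only [C_mul]
    ring
  have hmod : (Ideal.Quotient.mkₐ ℂ I).comp φ = Ideal.Quotient.mkₐ ℂ I := by
    ext k
    simp only [φ, AlgHom.comp_apply, aeval_X, Ideal.Quotient.mkₐ_eq_mk]
    rw [Ideal.Quotient.eq]
    have : X k - C (u k) * lin a - C (v k) * lin b - X k
        = -C (u k) * lin a + -C (v k) * lin b := by ring
    rw [this]
    exact I.add_mem (I.mul_mem_left _ haI) (I.mul_mem_left _ hbI)
  have hker : I = RingHom.ker φ := by
    apply le_antisymm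
    · rw [hI, Ideal.span_le]
      rintro _ (rfl | rfl)
      · simp [RingHom.mem_ker, hφ, hau, hav]
      · simp [RingHom.mem_ker, hφ, hbu, hbv]
    · intro f hf
      have h := DFunLike.congr_fun hmod f
      rw [AlgHom.comp_apply, (RingHom.mem_ker).1 hf, map_zero] at h
      exact Ideal.Quotient.eq_zero_iff_mem.1 h.symm
  rw [hker]
  exact RingHom.ker_isPrime _

lemma jac_le_span_pair {ℓ n : ℕ} (a : Fin n → Fin ℓ → ℂ) {i j : Fin n} (hij : i ≠ j) :
    jac (∏ i, lin (a i)) ≤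
      Ideal.span ({lin (a i), lin (a j)} : Set (MvPolynomial (Fin ℓ) ℂ)) := by
  rw [jac, Ideal.span_le]
  rintro _ ⟨k, rfl⟩
  dsimp only
  have hj : j ∈ Finset.univ.erase i := by simp [hij.symm]
  rw [← Finset.mul_prod_erase _ _ (Finset.mem_univ i), ← Finset.mul_prod_erase _ _ hj]
  simp only [Derivation.leibniz, smul_eq_mul]
  rw [SetLike.mem_coe, Ideal.mem_span_pair]
  generalize ∏ x ∈ (Finset.univ.erase i).erase j, lin (a x) = R
  exact ⟨lin (a j) * pderiv k R + R * pderiv k (lin (a j)), R * pderiv k (lin (a i)), by ring⟩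

lemma prod_mem_jac {ℓ n : ℕ} (hn : n ≠ 0) (a : Fin n → Fin ℓ → ℂ) :
    ∏ i, lin (a i) ∈ jac (∏ i, lin (a i)) := by
  have hh : (∏ i, lin (a i)).IsHomogeneous n := by
    simpa using IsHomogeneous.prod Finset.univ (fun i => lin (a i)) (fun _ => 1)
      fun i _ => isHomogeneous_lin (a i)
  have hE := hh.sum_X_mul_pderiv
  have hmem : n • ∏ i, lin (a i) ∈ jac (∏ i, lin (a i)) := by
    rw [← hE]
    exact Ideal.sum_mem _ fun k _ => Ideal.mul_mem_left _ _ (Ideal.subset_span ⟨k, rfl⟩)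
  have h := Ideal.mul_mem_left _ (C ((n : ℂ)⁻¹)) hmem
  have hn' : (n : ℂ) ≠ 0 := Nat.cast_ne_zero.2 hn
  rwa [nsmul_eq_mul, ← mul_assoc, ← map_natCast (C : ℂ →+* MvPolynomial (Fin ℓ) ℂ) n, ← C_mul,
    inv_mul_cancel₀ hn', C_1, one_mul] at h

/-- The singular locus of the arrangement lies in the union of the pairwise intersections of its
hyperplanes, phrased for primes. -/
lemma exists_pair_mem_of_jac_le {ℓ n : ℕ} (hn : n ≠ 0) (a : Fin n → Fin ℓ → ℂ)
    (ha0 : ∀ i, a i ≠ 0) {P : Ideal (MvPolynomial (Fin ℓ) ℂ)} [hP : P.IsPrime]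
    (hJ : jac (∏ i, lin (a i)) ≤ P) :
    ∃ i j, i ≠ j ∧ lin (a i) ∈ P ∧ lin (a j) ∈ P := by
  obtain ⟨i, -, hi⟩ := hP.prod_mem_iff.1 (hJ (prod_mem_jac hn a))
  obtain ⟨k, hk⟩ := Function.ne_iff.1 (ha0 i)
  have hd : pderiv k (∏ i, lin (a i)) ∈ P := hJ (Ideal.subset_span ⟨k, rfl⟩)
  rw [← Finset.mul_prod_erase _ _ (Finset.mem_univ i), Derivation.leibniz, smul_eq_mul,
    smul_eq_mul, pderiv_lin, P.add_mem_iff_right (P.mul_mem_right _ hi)] at hd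
  have hC : C (a i k) ∉ P := fun h =>
    hP.ne_top (P.eq_top_of_isUnit_mem h ((isUnit_iff_ne_zero.2 hk).map C))
  obtain ⟨j, hj, hjP⟩ := hP.prod_mem_iff.1 ((hP.mem_or_mem hd).resolve_right hC)
  exact ⟨i, j, (Finset.ne_of_mem_erase hj).symm, hi, hjP⟩

/-- The radical of the Jacobian ideal of a central arrangement is the intersection of the
prime ideals `(α_i, α_j)` of the codimension-two intersections. -/
theorem radical_jacobian_eq_inf_codim_two_primes
    {ℓ n : ℕ} (hℓ : 2 ≤ ℓ) (hn : 2 ≤ n)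
    (a : Fin n → Fin ℓ → ℂ)
    (ha0 : ∀ i, a i ≠ 0)
    (haprop : ∀ i j, i ≠ j → ∀ c : ℂ, a i ≠ c • a j) :
    (jac (∏ i, lin (a i))).radical =
      ⨅ (i : Fin n) (j : Fin n) (_ : i < j),
        Ideal.span ({lin (a i), lin (a j)} : Set (MvPolynomial (Fin ℓ) ℂ)) := by
  apply le_antisymm
  · refine le_iInf fun i => le_iInf fun j => le_iInf fun hij => ?_
    exact (isPrime_span_pair (ha0 j) (haprop i j hij.ne)).radical_le_iff.2
      (jac_le_span_pair a hij.ne)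
  · rw [Ideal.radical_eq_sInf]
    refine le_sInf fun P ⟨hJ, hP⟩ => ?_
    obtain ⟨i, j, hij, hi, hj⟩ := exists_pair_mem_of_jac_le (by omega) a ha0 hJ
    wlog hlt : i < j generalizing i j
    · exact this j i hij.symm hj hi (lt_of_le_of_ne (not_lt.1 hlt) hij.symm)
    refine (iInf_le_of_le i <| iInf_le_of_le j <| iInf_le _ hlt).trans ?_
    rw [Ideal.span_le]
    rintro _ (rfl | rfl)
    exacts [hi, hj]
end

section
/- Let ℓ ≥ 3 and let A be a central essential arrangement in ℂ^ℓ given by pairwise non-proportional nonzero linear forms α_1,…,α_n with hyperplanes H_i = ker α_i and ⋂_i H_i = {0}. Let K ⊆ ℂ^ℓ be a hyperplane that is not one of the H_i. Then μ_A(K) < n − 1, where μ_A(K) = Σ_{X ∈ L_2(A), X ⊆ K} (|A_X| − 1), the sum being over all codimension-two subspaces X of ℂ^ℓ of the form X = H_i ∩ H_j (i ≠ j) with X ⊆ K, and A_X = {i : X ⊆ H_i}. -/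
/-!
Write `K = lker b` and `H i = lker (a i)`. These are pairwise distinct coatoms of the modular
lattice of subspaces, so two of them meet in a subspace covered by both. If `X = H i ⊓ H j ≤ K`
and `X ≤ H k`, then `X = H k ⊓ K` (`inf_eq_inf_of_le`); hence the index sets `A_X` of the summands are
pairwise disjoint, and `∑ |A_X| ≤ n`.

If at least two subspaces `X` occur, then `∑ (|A_X| - 1) ≤ n - 2`. If exactly one occurs, its `A_X`
is not the whole index set: otherwise `X ≤ ⨅ i, H i = ⊥`, while `X` is the common kernel of two
linear forms on a space of dimension `ℓ ≥ 3`. So again the sum is at most `n - 2`. If none occurs,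
the sum is `0`, and `n ≥ ℓ ≥ 3` because `n` linear forms have no common nonzero zero.
-/

open scoped Classical

/-- The hyperplane `ker (v ↦ ∑ a_k v_k)` with coefficient vector `a`. -/
noncomputable def lker {ℓ : ℕ} (a : Fin ℓ → ℂ) : Submodule ℂ (Fin ℓ → ℂ) :=
  LinearMap.ker (∑ k, a k • (LinearMap.proj k : (Fin ℓ → ℂ) →ₗ[ℂ] ℂ))

/-- `μ_A(K) = ∑_{X ∈ L₂(A), X ⊆ K} μ(X)`, the sum over the codimension-two intersections
`X = H_i ∩ H_j` (`i ≠ j`) contained in `K` of `μ(X) = |A_X| - 1`. -/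
noncomputable def muA {ℓ n : ℕ} (a : Fin n → Fin ℓ → ℂ)
    (K : Submodule ℂ (Fin ℓ → ℂ)) : ℕ :=
  ∑ X ∈ ((Finset.univ : Finset (Fin n × Fin n)).filter
      (fun p => p.1 ≠ p.2 ∧ lker (a p.1) ⊓ lker (a p.2) ≤ K)).image
      (fun p => lker (a p.1) ⊓ lker (a p.2)),
    ((Finset.univ.filter fun i => X ≤ lker (a i)).card - 1)

/-- The linear form with coefficient vector `a`, whose kernel is `lker a`. -/
noncomputable def lform {ℓ : ℕ} (a : Fin ℓ → ℂ) : (Fin ℓ → ℂ) →ₗ[ℂ] ℂ :=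
  ∑ k, a k • (LinearMap.proj k : (Fin ℓ → ℂ) →ₗ[ℂ] ℂ)

lemma lform_single {ℓ : ℕ} (a : Fin ℓ → ℂ) (k : Fin ℓ) : lform a (Pi.single k 1) = a k := by
  simp [lform, LinearMap.sum_apply, Pi.single_apply]

lemma isCoatom_lker {ℓ : ℕ} {a : Fin ℓ → ℂ} (ha : a ≠ 0) : IsCoatom (lker a) := by
  refine LinearMap.isCoatom_ker_of_surjective (f := lform a) (LinearMap.surjective fun h => ha ?_)
  ext k
  rw [← lform_single a k, h]
  rfl

lemma exists_eq_smul_of_lker_eq {ℓ : ℕ} {a b : Fin ℓ → ℂ} (h : lker a = lker b) :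
    ∃ c : ℂ, a = c • b := by
  have h1 : lform a ∈ Submodule.span ℂ (Set.range fun _ : Unit => lform b) := by
    apply mem_span_of_iInf_ker_le_ker
    rw [iInf_const]
    exact h.ge
  rw [Set.range_const, Submodule.mem_span_singleton] at h1
  obtain ⟨c, hc⟩ := h1
  refine ⟨c, funext fun k => ?_⟩
  rw [← lform_single a k, ← hc, LinearMap.smul_apply, lform_single, Pi.smul_apply]

/-- Distinct coatoms of a modular lattice meet in an element covered by both. -/
lemma inf_covBy_of_isCoatom {α : Type*} [Lattice α] [OrderTop α] [IsModularLattice α] {H K : α}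
    (hH : IsCoatom H) (hK : IsCoatom K) (h : H ≠ K) : H ⊓ K ⋖ K := by
  apply IsLowerModularLattice.inf_covBy_of_covBy_sup
  rw [hH.sup_eq_top_of_ne hK h]
  exact hH.covBy_top

/-- Two intersections of pairs of distinct coatoms coincide as soon as one contains the other:
both have corank two. -/
lemma inf_eq_inf_of_le {α : Type*} [Lattice α] [OrderTop α] [IsModularLattice α]
    {H H' L K : α} (hH : IsCoatom H) (hH' : IsCoatom H') (hL : IsCoatom L) (hK : IsCoatom K)
    (h : H ≠ H') (h' : L ≠ K) (hle : H ⊓ H' ≤ L ⊓ K) : H ⊓ H' = L ⊓ K := by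
  -- A coatom `L ≠ M` lying above `H ⊓ M`, which `M` covers, satisfies `H ⊓ M = L ⊓ M`.
  have key : ∀ {H M L : α}, IsCoatom H → IsCoatom M → IsCoatom L → H ≠ M → L ≠ M →
      H ⊓ M ≤ L → H ⊓ M = L ⊓ M := fun hH hM hL h1 h2 h3 =>
    ((inf_covBy_of_isCoatom hH hM h1).eq_or_eq (le_inf h3 inf_le_right) inf_le_right).elim Eq.symm
      fun e => absurd e (inf_covBy_of_isCoatom hL hM h2).ne
  have hLle := hle.trans inf_le_left
  have hKle := hle.trans inf_le_right
  by_cases hLH : L = H'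
  · subst hLH
    rw [key hH hH' hK h h'.symm hKle, inf_comm]
  · have e := key hH hH' hL h hLH hLle
    rw [e, inf_comm L H', inf_comm L K]
    refine key hH' hL hK (Ne.symm hLH) h'.symm ?_
    rw [inf_comm, ← e]
    exact hKle

/-- If `ℓ ≥ 3`, the arrangement `A` is essential, and the hyperplane `K` is not a
hyperplane of `A`, then `μ_A(K) < |A| - 1`. -/
theorem muA_lt_of_not_mem_arrangement
    {ℓ n : ℕ} (hℓ : 3 ≤ ℓ)
    (a : Fin n → Fin ℓ → ℂ)
    (ha0 : ∀ i, a i ≠ 0)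
    (haprop : ∀ i j, i ≠ j → ∀ c : ℂ, a i ≠ c • a j)
    (hess : ⨅ i, lker (a i) = (⊥ : Submodule ℂ (Fin ℓ → ℂ)))
    (b : Fin ℓ → ℂ) (hb : b ≠ 0)
    (hK : ∀ i, lker b ≠ lker (a i)) :
    muA a (lker b) < n - 1 := by
  classical
  have hinj : ∀ i j, i ≠ j → lker (a i) ≠ lker (a j) := fun i j hij h => by
    obtain ⟨c, hc⟩ := exists_eq_smul_of_lker_eq h
    exact haprop i j hij c hc
  have hco : ∀ i, IsCoatom (lker (a i)) := fun i => isCoatom_lker (ha0 i)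
  have hbco : IsCoatom (lker b) := isCoatom_lker hb
  have hn : 3 ≤ n := by
    have hker : LinearMap.ker (LinearMap.pi fun i => lform (a i)) = ⊥ := by
      rw [LinearMap.ker_pi]
      exact hess
    have := LinearMap.finrank_le_finrank_of_injective (LinearMap.ker_eq_bot.1 hker)
    simp only [Module.finrank_fin_fun] at this
    omega
  have hne_bot : ∀ i j, lker (a i) ⊓ lker (a j) ≠ ⊥ := fun i j h => by
    have hker : LinearMap.ker ((lform (a i)).prod (lform (a j))) = ⊥ := by
      rw [LinearMap.ker_prod]
      exact h
    have := LinearMap.finrank_le_finrank_of_injective (LinearMap.ker_eq_bot.1 hker)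
    simp only [Module.finrank_fin_fun, Module.finrank_prod, Module.finrank_self] at this
    omega
  unfold muA
  set S := ((Finset.univ : Finset (Fin n × Fin n)).filter
      (fun p => p.1 ≠ p.2 ∧ lker (a p.1) ⊓ lker (a p.2) ≤ lker b)).image
      (fun p => lker (a p.1) ⊓ lker (a p.2)) with hS
  let A : Submodule ℂ (Fin ℓ → ℂ) → Finset (Fin n) :=
    fun X => Finset.univ.filter fun i => X ≤ lker (a i)
  change ∑ X ∈ S, ((A X).card - 1) < n - 1
  have hmem : ∀ X ∈ S, ∃ i j, i ≠ j ∧ lker (a i) ⊓ lker (a j) ≤ lker b ∧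
      lker (a i) ⊓ lker (a j) = X := by
    intro X hX
    simp only [hS, Finset.mem_image, Finset.mem_filter, Finset.mem_univ, true_and] at hX
    obtain ⟨⟨i, j⟩, ⟨h1, h2⟩, h3⟩ := hX
    exact ⟨i, j, h1, h2, h3⟩
  have hXeq : ∀ X ∈ S, ∀ k ∈ A X, X = lker (a k) ⊓ lker b := by
    intro X hX k hk
    obtain ⟨i, j, hij, hle, rfl⟩ := hmem X hX
    exact inf_eq_inf_of_le (hco i) (hco j) (hco k) hbco (hinj i j hij) (hK k).symm
      (le_inf (Finset.mem_filter.1 hk).2 hle)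
  have hdisj : (S : Set (Submodule ℂ (Fin ℓ → ℂ))).PairwiseDisjoint A := by
    intro X hX Y hY hXY
    rw [Function.onFun, Finset.disjoint_left]
    intro k hkX hkY
    exact hXY ((hXeq X hX k hkX).trans (hXeq Y hY k hkY).symm)
  have hsum : ∑ X ∈ S, (A X).card ≤ n := by
    rw [← Finset.card_biUnion hdisj]
    exact (Finset.card_le_univ _).trans_eq (Fintype.card_fin n)
  have hpos : ∀ X ∈ S, 1 ≤ (A X).card := by
    intro X hX
    obtain ⟨i, j, -, -, rfl⟩ := hmem X hX
    exact Finset.card_pos.2 ⟨i, Finset.mem_filter.2 ⟨Finset.mem_univ _, inf_le_left⟩⟩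
  have hsplit : ∑ X ∈ S, ((A X).card - 1) + S.card = ∑ X ∈ S, (A X).card := by
    rw [Finset.card_eq_sum_ones, ← Finset.sum_add_distrib]
    exact Finset.sum_congr rfl fun X hX => Nat.sub_add_cancel (hpos X hX)
  rcases Nat.lt_or_ge S.card 2 with hc | hc
  · rcases Nat.lt_or_ge S.card 1 with h0 | h1
    · rw [Finset.card_eq_zero.1 (Nat.lt_one_iff.1 h0), Finset.sum_empty]
      omega
    · obtain ⟨X, hX⟩ := Finset.card_eq_one.1 (by omega : S.card = 1)
      rw [hX, Finset.sum_singleton]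
      have hXS : X ∈ S := hX ▸ Finset.mem_singleton_self X
      have hlt : (A X).card < n := by
        by_contra! hge
        have huniv : A X = Finset.univ :=
          (Finset.card_eq_iff_eq_univ _).1 (le_antisymm (Finset.card_le_univ _) (by simpa using hge))
        obtain ⟨i, j, -, -, rfl⟩ := hmem X hXS
        refine hne_bot i j (le_bot_iff.1 (hess ▸ le_iInf fun k => ?_))
        have hk : k ∈ A (lker (a i) ⊓ lker (a j)) := huniv ▸ Finset.mem_univ k
        exact (Finset.mem_filter.1 hk).2
      have := hpos X hXS
      omega
  · omega
end
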